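/- Let P be the R-measure and c = (1/2, √3/6). The set {S₁(c), S₂(c), S₃(c)} = {(1/6, √3/18), (5/6, √3/18), (1/2, 7√3/18)} is the unique optimal set of three-means for P, and the quantization error is V₃(P) = 1/54. -/

import Mathlib

open MeasureTheory ENNReal

noncomputable section

abbrev E2 : Type := EuclideanSpace ℝ (Fin 2)

/-- The point (a, b) of the Euclidean plane. -/
def pt (a b : ℝ) : E2 := (WithLp.equiv 2 (Fin 2 → ℝ)).symm ![a, b]

/-- S₁(x) = x/3. -/
def S1 : E2 → E2 := fun x => (3 : ℝ)⁻¹ • x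

/-- S₂(x) = x/3 + (2/3, 0). -/
def S2 : E2 → E2 := fun x => (3 : ℝ)⁻¹ • x + pt (2/3) 0

/-- S₃(x) = x/3 + (1/3, √3/3). -/
def S3 : E2 → E2 := fun x => (3 : ℝ)⁻¹ • x + pt (1/3) (Real.sqrt 3 / 3)

def Smap : Fin 3 → E2 → E2 := ![S1, S2, S3]

/-- For a word ω = ω₁⋯ω_k ∈ {1,2,3}^k, the composition S_ω = S_{ω₁} ∘ ⋯ ∘ S_{ω_k}. -/
def Sword {k : ℕ} (ω : Fin k → Fin 3) : E2 → E2 :=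
  fun x => (List.ofFn fun i => Smap (ω i)).foldr (fun g y => g y) x

/-- The closed triangle with vertices (0,0), (1,0), (1/2, √3/2). -/
def Tri : Set E2 := convexHull ℝ {pt 0 0, pt 1 0, pt (1/2) (Real.sqrt 3 / 2)}

/-- The distortion error ∫ min_{a ∈ α} ‖x − a‖² dμ of a set α of points. -/
def err (μ : Measure E2) (α : Set E2) : ℝ≥0∞ :=
  ∫⁻ x, ⨅ a ∈ α, ENNReal.ofReal (‖x - a‖ ^ 2) ∂μ

/-- The n-th quantization error V_n(μ). -/
def quantErr (μ : Measure E2) (n : ℕ) : ℝ≥0∞ :=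
  ⨅ (α : Set E2) (_ : α.Finite ∧ α.ncard ≤ n), err μ α

/-- α is an optimal set of n-means for μ. -/
def IsOptimal (μ : Measure E2) (n : ℕ) (α : Set E2) : Prop :=
  α.Finite ∧ α.ncard ≤ n ∧ err μ α = quantErr μ n

/-!
Write `c` for the centroid of the triangle. For a finite set `s` and every `x`, the squared distance
from `x` to `s` is at least `‖x - c‖² - ∑ a ∈ s, max (‖x - c‖² - ‖x - a‖²) 0`. Hence the error of
`s` is at least the variance `1 / 6` of `P` minus the integrals of the summands, the gains of the
points of `s`, and it suffices that each gain is at most `4 / 81`, with equality only at the points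
`Smap i c`.

The integrand of a gain is convex in `x`, because `‖x - c‖² - ‖x - a‖²` is affine. By
self-similarity, `P` is dominated in convex order by the uniform measure on the nine vertices `y p`
of the three first-level triangles, so the gain of `a` is at most a ninth of
`∑ p ∈ T, (‖y p - c‖² - ‖y p - a‖²)`, where `T` consists of the `p` with a positive summand. For
any `T`, the product of that sum with `#T` is `‖∑ p ∈ T, (y p - c)‖² - ‖∑ p ∈ T, (y p - a)‖²`, whose
first term is a quadratic form in integer weights. Checking all `T` shows that it is at most
`4 / 9 * #T`, with equality for nonempty `T` only when `T` is the vertex set of one first-level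
triangle; equality then makes `a` the mean of these three vertices.
-/

open Finset Metric Set
open scoped BigOperators InnerProductSpace NNReal

/-- The measure `μ` is invariant under the iterated function system `S` with equal weights on the
maps; for `S = Smap` these are the R-measures. -/
def IsSelfSimilar {ι X : Type*} [Fintype ι] [MeasurableSpace X] (S : ι → X → X)
    (μ : Measure X) : Prop :=
  μ = (Fintype.card ι : ℝ≥0∞)⁻¹ • ∑ i, μ.map (S i)

namespace IsSelfSimilar

variable {ι X : Type*} [Fintype ι] [MeasurableSpace X] {S : ι → X → X} {μ : Measure X}

lemma lintegral_eq (hμ : IsSelfSimilar S μ) (hS : ∀ i, Measurable (S i)) {f : X → ℝ≥0∞}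
    (hf : Measurable f) :
    ∫⁻ x, f x ∂μ = (Fintype.card ι : ℝ≥0∞)⁻¹ * ∑ i, ∫⁻ x, f (S i x) ∂μ := by
  conv_lhs => rw [hμ]
  simp only [lintegral_smul_measure, lintegral_finsetSum_measure, lintegral_map hf (hS _),
    smul_eq_mul]

lemma integrable_map [Nonempty ι] (hμ : IsSelfSimilar S μ) {f : X → ℝ} (hf : Integrable f μ)
    (i : ι) : Integrable f (μ.map (S i)) := by
  rw [hμ, integrable_smul_measure (by simp) (by simp), integrable_finsetSum_measure] at hf
  exact hf i (mem_univ i)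

lemma integrable_comp [Nonempty ι] (hμ : IsSelfSimilar S μ) (hS : ∀ i, Measurable (S i))
    {f : X → ℝ} (hf : Integrable f μ) (i : ι) : Integrable (fun x => f (S i x)) μ :=
  (hμ.integrable_map hf i).comp_measurable (hS i)

lemma integral_eq_expect [Nonempty ι] (hμ : IsSelfSimilar S μ) (hS : ∀ i, Measurable (S i))
    {f : X → ℝ} (hf : Integrable f μ) : ∫ x, f x ∂μ = 𝔼 i, ∫ x, f (S i x) ∂μ := by
  have hmap := hμ.integrable_map hf
  conv_lhs => rw [hμ, integral_smul_measure, integral_finsetSum_measure fun i _ => hmap i]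
  simp only [fun i => integral_map (hS i).aemeasurable (hmap i).aestronglyMeasurable,
    Fintype.expect_eq_sum_div_card, toReal_inv, toReal_natCast, smul_eq_mul, inv_mul_eq_div]

lemma integral_eq_integral_expect [Nonempty ι] (hμ : IsSelfSimilar S μ)
    (hS : ∀ i, Measurable (S i)) {f : X → ℝ} (hf : Integrable f μ) :
    ∫ x, f x ∂μ = ∫ x, 𝔼 i, f (S i x) ∂μ := by
  simp only [hμ.integral_eq_expect hS hf, Fintype.expect_eq_sum_div_card, integral_div,
    integral_finsetSum _ fun i _ => hμ.integrable_comp hS hf i]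

-- Invariance bounds `∫ arctan d` by `∫ arctan (r * d)`; as `arctan` is bounded and strictly
-- increasing, this forces `d = r * d` almost everywhere.
lemma ae_eq_zero_of_comp_le_mul [IsFiniteMeasure μ] [Nonempty ι] (hμ : IsSelfSimilar S μ)
    (hS : ∀ i, Measurable (S i)) {d : X → ℝ} (hd : Measurable d) (hd₀ : ∀ x, 0 ≤ d x) {r : ℝ}
    (hr : r < 1) (hdS : ∀ i x, d (S i x) ≤ r * d x) : ∀ᵐ x ∂μ, d x = 0 := by
  have integrable_arctan {g : X → ℝ} (hg : Measurable g) :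
      Integrable (fun x => Real.arctan (g x)) μ :=
    .of_bound (Real.measurable_arctan.comp hg).aestronglyMeasurable (Real.pi / 2) <|
      .of_forall fun x => abs_le.2
        ⟨(Real.neg_pi_div_two_lt_arctan _).le, (Real.arctan_lt_pi_div_two _).le⟩
  have hd_int := integrable_arctan hd
  have hrd_int := integrable_arctan (hd.const_mul r)
  have arctan_le (x : X) : Real.arctan (r * d x) ≤ Real.arctan (d x) :=
    Real.arctan_strictMono.monotone (mul_le_of_le_one_left (hd₀ x) hr.le)
  have integral_le : ∫ x, Real.arctan (d x) ∂μ ≤ ∫ x, Real.arctan (r * d x) ∂μ := by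
    rw [hμ.integral_eq_expect hS hd_int]
    exact expect_le univ_nonempty fun i _ => integral_mono (hμ.integrable_comp hS hd_int i)
      hrd_int fun x => Real.arctan_strictMono.monotone (hdS i x)
  have integral_eq := (integral_mono hrd_int hd_int arctan_le).antisymm integral_le
  filter_upwards [(integral_eq_iff_of_ae_le hrd_int hd_int (.of_forall arctan_le)).1 integral_eq]
    with x hx
  have hfix : r * d x = d x := Real.arctan_injective hx
  nlinarith

lemma ae_mem_of_mapsTo [PseudoMetricSpace X] [OpensMeasurableSpace X] [IsFiniteMeasure μ]
    [Nonempty ι] (hμ : IsSelfSimilar S μ) (hSm : ∀ i, Measurable (S i)) {r : ℝ≥0} (hr : r < 1)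
    (hS : ∀ i, LipschitzWith r (S i)) {K : Set X} (hK : IsClosed K) (hne : K.Nonempty)
    (hSK : ∀ i, MapsTo (S i) K K) : ∀ᵐ x ∂μ, x ∈ K := by
  have infDist_le (i : ι) (x : X) : infDist (S i x) K ≤ r * infDist x K := by
    have : Nonempty K := hne.to_subtype
    rw [infDist_eq_iInf (x := x), Real.mul_iInf_of_nonneg r.coe_nonneg]
    exact le_ciInf fun y => (infDist_le_dist_of_mem (hSK i y.2)).trans ((hS i).dist_le_mul x y)
  filter_upwards [hμ.ae_eq_zero_of_comp_le_mul hSm measurable_infDist (fun _ => infDist_nonneg)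
    (NNReal.coe_lt_one.2 hr) infDist_le] with x hx
  exact (hK.mem_iff_infDist_zero hne).2 hx

end IsSelfSimilar

section Homothety

variable {E : Type*} [NormedAddCommGroup E] [NormedSpace ℝ E]

lemma lipschitzWith_homothety (c : E) (r : ℝ≥0) :
    LipschitzWith r (AffineMap.homothety c (r : ℝ)) := by
  refine LipschitzWith.of_dist_le_mul fun x y => le_of_eq ?_
  simp only [AffineMap.homothety_apply, vsub_eq_sub, vadd_eq_add, dist_add_right, dist_smul₀,
    dist_sub_right, NNReal.norm_eq]

lemma mapsTo_homothety_of_convex {s : Set E} (hs : Convex ℝ s) {c : E} (hc : c ∈ s) {r : ℝ}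
    (hr₀ : 0 ≤ r) (hr₁ : r ≤ 1) : MapsTo (AffineMap.homothety c r) s s := fun x hx => by
  rw [AffineMap.homothety_eq_lineMap]
  exact hs.lineMap_mem hc hx ⟨hr₀, hr₁⟩

lemma convexOn_homothety_le {f : E → ℝ} (hf : ConvexOn ℝ univ f) (c x : E) {r : ℝ}
    (hr₀ : 0 ≤ r) (hr₁ : r ≤ 1) :
    f (AffineMap.homothety c r x) ≤ r * f x + (1 - r) * f c := by
  have h := hf.2 (mem_univ x) (mem_univ c) hr₀ (sub_nonneg.2 hr₁) (add_sub_cancel r 1)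
  rwa [show r • x + (1 - r) • c = AffineMap.homothety c r x by
    rw [AffineMap.homothety_apply, vsub_eq_sub, vadd_eq_add]; module] at h

end Homothety

section HomothetySystem

variable {ι E : Type*} [Fintype ι] [Nonempty ι] [NormedAddCommGroup E] [NormedSpace ℝ E]
  {v : ι → E} {r : ℝ≥0}

lemma expect_expect_homothety_le_of_convexOn {f : E → ℝ} (hf : ConvexOn ℝ univ f) (hr : r ≤ 1) :
    𝔼 i, 𝔼 j, f (AffineMap.homothety (v i) (r : ℝ) (v j)) ≤ 𝔼 i, f (v i) :=
  calc 𝔼 i, 𝔼 j, f (AffineMap.homothety (v i) (r : ℝ) (v j))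
    _ ≤ 𝔼 i, 𝔼 j, (r * f (v j) + (1 - r) * f (v i)) := by
        gcongr with i _ j _
        exact convexOn_homothety_le hf _ _ r.coe_nonneg (NNReal.coe_le_one.2 hr)
    _ = 𝔼 i, f (v i) := by
        simp only [expect_add_distrib, ← mul_expect, Fintype.expect_const]
        ring

variable [MeasurableSpace E] [BorelSpace E] {μ : Measure E}

namespace IsSelfSimilar

lemma ae_mem_convexHull [IsFiniteMeasure μ]
    (hμ : IsSelfSimilar (fun i => AffineMap.homothety (v i) (r : ℝ)) μ) (hr : r < 1) :
    ∀ᵐ x ∂μ, x ∈ convexHull ℝ (range v) :=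
  hμ.ae_mem_of_mapsTo (fun i => (lipschitzWith_homothety (v i) r).continuous.measurable) hr
    (fun i => lipschitzWith_homothety (v i) r)
    ((finite_range v).isCompact_convexHull ℝ).isClosed
    ((range_nonempty v).convexHull)
    fun i => mapsTo_homothety_of_convex (convex_convexHull ℝ _)
      (subset_convexHull ℝ _ (mem_range_self i)) r.coe_nonneg (NNReal.coe_le_one.2 hr.le)

lemma integrable_of_continuous [IsFiniteMeasure μ]
    (hμ : IsSelfSimilar (fun i => AffineMap.homothety (v i) (r : ℝ)) μ) (hr : r < 1)
    {f : E → ℝ} (hf : Continuous f) : Integrable f μ := by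
  have h : IntegrableOn f (convexHull ℝ (range v)) μ :=
    hf.continuousOn.integrableOn_compact ((finite_range v).isCompact_convexHull ℝ)
  rwa [IntegrableOn, Measure.restrict_eq_self_of_ae_mem (hμ.ae_mem_convexHull hr)] at h

lemma integral_sub_expect_le_pow_mul [IsProbabilityMeasure μ]
    (hμ : IsSelfSimilar (fun i => AffineMap.homothety (v i) (r : ℝ)) μ) (hr : r < 1) (n : ℕ)
    {f : E → ℝ} (hf : ConvexOn ℝ univ f) {K : ℝ≥0} (hfK : LipschitzWith K f) :
    ∫ x, f x ∂μ - 𝔼 i, f (v i) ≤ r ^ n * (K * 𝔼 i, ∫ x, dist x (v i) ∂μ) := by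
  induction n generalizing f K with
  | zero =>
    have hf_int := hμ.integrable_of_continuous hr hfK.continuous
    have le_dist (i : ι) : ∫ x, f x ∂μ - f (v i) ≤ K * ∫ x, dist x (v i) ∂μ := calc
      _ = ∫ x, (f x - f (v i)) ∂μ := by
        rw [integral_sub hf_int (integrable_const _), integral_const, probReal_univ, one_smul]
      _ ≤ ∫ x, K * dist x (v i) ∂μ :=
        integral_mono (hf_int.sub (integrable_const _))
          (hμ.integrable_of_continuous hr (by fun_prop)) fun x =>
            (le_abs_self _).trans (hfK.dist_le_mul x (v i))
      _ = _ := integral_const_mul _ _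
    calc ∫ x, f x ∂μ - 𝔼 i, f (v i) = 𝔼 i, (∫ x, f x ∂μ - f (v i)) := by
          rw [expect_sub_distrib, Fintype.expect_const]
      _ ≤ 𝔼 i, K * ∫ x, dist x (v i) ∂μ := expect_le_expect fun i _ => le_dist i
      _ = _ := by rw [← mul_expect, pow_zero, one_mul]
  | succ n ih =>
    let S (i : ι) : E →ᵃ[ℝ] E := AffineMap.homothety (v i) (r : ℝ)
    have hS (i : ι) : LipschitzWith r (S i) := lipschitzWith_homothety (v i) r
    calc ∫ x, f x ∂μ - 𝔼 i, f (v i)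
      _ ≤ 𝔼 i, ∫ x, f (S i x) ∂μ - 𝔼 i, 𝔼 j, f (S i (v j)) := by
          rw [hμ.integral_eq_expect (fun i => (hS i).continuous.measurable)
            (hμ.integrable_of_continuous hr hfK.continuous)]
          exact sub_le_sub_left (expect_expect_homothety_le_of_convexOn hf hr.le) _
      _ = 𝔼 i, (∫ x, f (S i x) ∂μ - 𝔼 j, f (S i (v j))) := (expect_sub_distrib _ _ _).symm
      _ ≤ r ^ n * ((K * r : ℝ≥0) * 𝔼 i, ∫ x, dist x (v i) ∂μ) :=
          expect_le univ_nonempty fun i _ => ih (hf.comp_affineMap (S i)) (hfK.comp (hS i))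
      _ = _ := by
          rw [NNReal.coe_mul]
          ring

-- Each application of the system turns `f` into functions `f ∘ S i` that are `r` times as
-- Lipschitz, so the excess of the integral over the average decays like `r ^ n`.
lemma integral_le_expect_of_convexOn [IsProbabilityMeasure μ]
    (hμ : IsSelfSimilar (fun i => AffineMap.homothety (v i) (r : ℝ)) μ) (hr : r < 1)
    {f : E → ℝ} (hf : ConvexOn ℝ univ f) {K : ℝ≥0} (hfK : LipschitzWith K f) :
    ∫ x, f x ∂μ ≤ 𝔼 i, f (v i) := by
  have hpow := (tendsto_pow_atTop_nhds_zero_of_lt_one r.coe_nonneg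
    (NNReal.coe_lt_one.2 hr)).mul_const (K * 𝔼 i, ∫ x, dist x (v i) ∂μ)
  rw [zero_mul] at hpow
  exact sub_nonpos.1 (ge_of_tendsto' hpow fun n => hμ.integral_sub_expect_le_pow_mul hr n hf hfK)

lemma integral_le_expect_expect_of_convexOn [IsProbabilityMeasure μ]
    (hμ : IsSelfSimilar (fun i => AffineMap.homothety (v i) (r : ℝ)) μ) (hr : r < 1)
    {f : E → ℝ} (hf : ConvexOn ℝ univ f) {K : ℝ≥0} (hfK : LipschitzWith K f) :
    ∫ x, f x ∂μ ≤ 𝔼 i, 𝔼 j, f (AffineMap.homothety (v i) (r : ℝ) (v j)) := by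
  have hS (i : ι) := lipschitzWith_homothety (v i) r
  rw [hμ.integral_eq_expect (fun i => (hS i).continuous.measurable)
    (hμ.integrable_of_continuous hr hfK.continuous)]
  exact expect_le_expect fun i _ => hμ.integral_le_expect_of_convexOn hr
    (hf.comp_affineMap (AffineMap.homothety (v i) (r : ℝ))) (hfK.comp (hS i))

end IsSelfSimilar

end HomothetySystem

section Variance

variable {ι E : Type*} [Fintype ι] [Nonempty ι] [NormedAddCommGroup E] [InnerProductSpace ℝ E]
  {v : ι → E} {c : E}

lemma expect_norm_homothety_sub_sq (hc : ∑ i, (v i - c) = 0) (r : ℝ) (x : E) :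
    𝔼 i, ‖AffineMap.homothety (v i) r x - c‖ ^ 2 =
      r ^ 2 * ‖x - c‖ ^ 2 + (1 - r) ^ 2 * 𝔼 i, ‖v i - c‖ ^ 2 := by
  have norm_sq (i : ι) : ‖AffineMap.homothety (v i) r x - c‖ ^ 2 =
      r ^ 2 * ‖x - c‖ ^ 2 + 2 * r * (1 - r) * ⟪x - c, v i - c⟫_ℝ +
        (1 - r) ^ 2 * ‖v i - c‖ ^ 2 := by
    rw [show AffineMap.homothety (v i) r x - c = r • (x - c) + (1 - r) • (v i - c) by
        rw [AffineMap.homothety_apply, vsub_eq_sub, vadd_eq_add]; module,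
      norm_add_sq_real, norm_smul, norm_smul, mul_pow, mul_pow, Real.norm_eq_abs,
      Real.norm_eq_abs, sq_abs, sq_abs, real_inner_smul_left, real_inner_smul_right]
    ring
  have expect_inner : 𝔼 i, ⟪x - c, v i - c⟫_ℝ = 0 := by
    rw [Fintype.expect_eq_sum_div_card, ← inner_sum, hc, inner_zero_right, zero_div]
  simp only [norm_sq, expect_add_distrib, ← mul_expect, Fintype.expect_const, expect_inner,
    mul_zero, add_zero]

lemma IsSelfSimilar.integral_norm_sub_sq [MeasurableSpace E] [BorelSpace E] {μ : Measure E}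
    [IsProbabilityMeasure μ] {r : ℝ≥0}
    (hμ : IsSelfSimilar (fun i => AffineMap.homothety (v i) (r : ℝ)) μ) (hr : r < 1)
    (hc : ∑ i, (v i - c) = 0) :
    ∫ x, ‖x - c‖ ^ 2 ∂μ = (1 - r) / (1 + r) * 𝔼 i, ‖v i - c‖ ^ 2 := by
  have hint : Integrable (fun x => ‖x - c‖ ^ 2) μ :=
    hμ.integrable_of_continuous hr (by fun_prop)
  have hinv := hμ.integral_eq_integral_expect
    (fun i => (lipschitzWith_homothety (v i) r).continuous.measurable) hint
  simp only [expect_norm_homothety_sub_sq hc] at hinv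
  rw [integral_add (hint.const_mul _) (integrable_const _), integral_const_mul, integral_const,
    probReal_univ, one_smul] at hinv
  have hr' : (1 - r : ℝ) ≠ 0 := (sub_pos.2 (NNReal.coe_lt_one.2 hr)).ne'
  have hr'' : (1 + r : ℝ) ≠ 0 := (add_pos_of_pos_of_nonneg one_pos r.coe_nonneg).ne'
  rw [div_mul_eq_mul_div, eq_div_iff hr'']
  refine mul_left_cancel₀ hr' ?_
  linear_combination hinv

end Variance

section Gain

/-- The amount by which the mean squared distance to `c` drops if each point of the space may use
whichever of `c` and `a` is nearer. The error of a finite set `s` is bounded below by subtracting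
the gains of the points of `s` from the error of `{c}`. -/
def distortionGain {E : Type*} [NormedAddCommGroup E] [MeasurableSpace E] (μ : Measure E)
    (c a : E) : ℝ :=
  ∫ x, max (‖x - c‖ ^ 2 - ‖x - a‖ ^ 2) 0 ∂μ

variable {E : Type*} [NormedAddCommGroup E] [InnerProductSpace ℝ E]

lemma norm_sub_sq_sub_norm_sub_sq (c a x : E) :
    ‖x - c‖ ^ 2 - ‖x - a‖ ^ 2 = 2 * ⟪a - c, x - c⟫_ℝ - ‖a - c‖ ^ 2 := by
  rw [← sub_sub_sub_cancel_right x a c, norm_sub_sq_real (x - c), real_inner_comm]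
  ring

lemma convexOn_max_norm_sub_sq_sub (c a : E) :
    ConvexOn ℝ univ fun x => max (‖x - c‖ ^ 2 - ‖x - a‖ ^ 2) 0 := by
  refine ConvexOn.sup ⟨convex_univ, fun x _ y _ s t _ _ hst => le_of_eq ?_⟩
    (convexOn_const 0 convex_univ)
  obtain rfl : s = 1 - t := eq_sub_of_add_eq hst
  simp only [norm_sub_sq_sub_norm_sub_sq, inner_sub_right, inner_add_right,
    real_inner_smul_right, smul_eq_mul]
  ring

lemma lipschitzWith_max_norm_sub_sq_sub (c a : E) :
    LipschitzWith (2 * ‖a - c‖₊) fun x => max (‖x - c‖ ^ 2 - ‖x - a‖ ^ 2) 0 := by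
  refine (LipschitzWith.of_dist_le_mul fun x y => ?_).max_const 0
  rw [Real.dist_eq, norm_sub_sq_sub_norm_sub_sq, norm_sub_sq_sub_norm_sub_sq,
    sub_sub_sub_cancel_right, ← mul_sub, ← inner_sub_right, sub_sub_sub_cancel_right, abs_mul,
    abs_two, dist_eq_norm, NNReal.coe_mul, NNReal.coe_ofNat, coe_nnnorm, mul_assoc]
  gcongr
  exact abs_real_inner_le_norm _ _

lemma card_mul_sum_norm_sub_sq_sub {κ : Type*} (T : Finset κ) (y : κ → E) (c a : E) :
    (#T : ℝ) * ∑ p ∈ T, (‖y p - c‖ ^ 2 - ‖y p - a‖ ^ 2) =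
      ‖∑ p ∈ T, (y p - c)‖ ^ 2 - ‖∑ p ∈ T, (y p - a)‖ ^ 2 := by
  have hsum : ∑ p ∈ T, (y p - a) = ∑ p ∈ T, (y p - c) - (#T : ℝ) • (a - c) := by
    rw [Nat.cast_smul_eq_nsmul, ← sum_const, ← sum_sub_distrib]
    simp only [sub_sub_sub_cancel_right]
  rw [hsum, norm_sub_sq_real, real_inner_smul_right, norm_smul, Real.norm_natCast,
    ← real_inner_comm, inner_sum]
  simp only [norm_sub_sq_sub_norm_sub_sq, sum_sub_distrib, ← mul_sum, sum_const, nsmul_eq_mul]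
  ring

lemma IsSelfSimilar.exists_distortionGain_le {ι : Type*} [Fintype ι] [Nonempty ι] {v : ι → E}
    {r : ℝ≥0} [MeasurableSpace E] [BorelSpace E] {μ : Measure E} [IsProbabilityMeasure μ]
    (hμ : IsSelfSimilar (fun i => AffineMap.homothety (v i) (r : ℝ)) μ) (hr : r < 1) (c a : E) :
    ∃ T : Finset (ι × ι), distortionGain μ c a ≤
      (∑ p ∈ T, (‖AffineMap.homothety (v p.1) (r : ℝ) (v p.2) - c‖ ^ 2 -
        ‖AffineMap.homothety (v p.1) (r : ℝ) (v p.2) - a‖ ^ 2)) / (Fintype.card ι : ℝ) ^ 2 := by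
  let gain (p : ι × ι) : ℝ := ‖AffineMap.homothety (v p.1) (r : ℝ) (v p.2) - c‖ ^ 2 -
    ‖AffineMap.homothety (v p.1) (r : ℝ) (v p.2) - a‖ ^ 2
  have sum_max : ∑ p, max (gain p) 0 = ∑ p with 0 < gain p, gain p := by
    rw [sum_filter]
    exact sum_congr rfl fun p _ => max_def_lt' _ _
  refine ⟨({p | 0 < gain p} : Finset _), ?_⟩
  calc distortionGain μ c a
    _ ≤ 𝔼 i, 𝔼 j, max (gain (i, j)) 0 := hμ.integral_le_expect_expect_of_convexOn hr
        (convexOn_max_norm_sub_sq_sub c a) (lipschitzWith_max_norm_sub_sq_sub c a)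
    _ = (∑ p, max (gain p) 0) / (Fintype.card ι : ℝ) ^ 2 := by
        rw [← expect_product _ _ fun p => max (gain p) 0, univ_product_univ,
          Fintype.expect_eq_sum_div_card, Fintype.card_prod, Nat.cast_mul, sq]
    _ = _ := by rw [sum_max]

end Gain

section Error

lemma ofReal_integral_le_lintegral_ofReal {X : Type*} [MeasurableSpace X] {μ : Measure X}
    {f : X → ℝ} (hf : Integrable f μ) :
    ENNReal.ofReal (∫ x, f x ∂μ) ≤ ∫⁻ x, ENNReal.ofReal (f x) ∂μ := by
  rw [integral_eq_lintegral_pos_part_sub_lintegral_neg_part hf]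
  exact (ofReal_le_ofReal (sub_le_self _ toReal_nonneg)).trans ofReal_toReal_le

variable {μ : Measure E2} {c : E2}

lemma ofReal_integral_sub_sum_distortionGain_le_err
    (hc : Integrable (fun x => ‖x - c‖ ^ 2) μ) (s : Finset E2) :
    ENNReal.ofReal (∫ x, ‖x - c‖ ^ 2 ∂μ - ∑ a ∈ s, distortionGain μ c a) ≤ err μ s := by
  have hgain (a : E2) : Integrable (fun x => max (‖x - c‖ ^ 2 - ‖x - a‖ ^ 2) 0) μ :=
    hc.mono' (Continuous.aestronglyMeasurable (by fun_prop)) <| .of_forall fun x => by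
      rw [Real.norm_of_nonneg (le_max_right _ _)]
      exact max_le (sub_le_self _ (sq_nonneg _)) (sq_nonneg _)
  have hsum := integrable_finsetSum s fun a _ => hgain a
  simp only [distortionGain]
  rw [← integral_finsetSum s fun a _ => hgain a, ← integral_sub hc hsum]
  refine (ofReal_integral_le_lintegral_ofReal (hc.sub hsum)).trans ?_
  refine lintegral_mono fun x => le_iInf₂ fun a ha => ofReal_le_ofReal ?_
  refine sub_le_comm.1 ?_
  exact (le_max_left _ _).trans
    (single_le_sum (f := fun a => max (‖x - c‖ ^ 2 - ‖x - a‖ ^ 2) 0)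
      (fun _ _ => le_max_right _ _) (Finset.mem_coe.1 ha))

lemma err_singleton (hc : Integrable (fun x => ‖x - c‖ ^ 2) μ) :
    err μ {c} = ENNReal.ofReal (∫ x, ‖x - c‖ ^ 2 ∂μ) := by
  simp only [err, _root_.iInf_singleton]
  exact (ofReal_integral_eq_lintegral_ofReal hc (.of_forall fun _ => sq_nonneg _)).symm

lemma IsSelfSimilar.err_range_le {ι : Type*} [Fintype ι] [Nonempty ι] {S : ι → E2 → E2}
    (hμ : IsSelfSimilar S μ) {K : ℝ≥0} (hS : ∀ i, LipschitzWith K (S i)) (c : E2) :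
    err μ (range fun i => S i c) ≤ K ^ 2 * err μ {c} := by
  have hmeas : Measurable fun x : E2 =>
      ⨅ a ∈ range fun i => S i c, ENNReal.ofReal (‖x - a‖ ^ 2) :=
    Measurable.biInf _ (countable_range _) fun a _ => by fun_prop
  have pointwise (i : ι) (x : E2) : ⨅ a ∈ range fun i => S i c,
      ENNReal.ofReal (‖S i x - a‖ ^ 2) ≤ K ^ 2 * ENNReal.ofReal (‖x - c‖ ^ 2) := by
    refine (iInf₂_le (S i c) (mem_range_self i)).trans ?_
    simp only [ofReal_pow (norm_nonneg _), ofReal_norm, ← edist_eq_enorm_sub, ← mul_pow]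
    gcongr
    exact hS i x c
  have lintegral_le (i : ι) : ∫⁻ x, ⨅ a ∈ range fun i => S i c,
      ENNReal.ofReal (‖S i x - a‖ ^ 2) ∂μ ≤ K ^ 2 * err μ {c} := by
    refine (lintegral_mono (pointwise i)).trans_eq ?_
    simp only [err, _root_.iInf_singleton]
    exact lintegral_const_mul _ (by fun_prop)
  calc err μ (range fun i => S i c)
    _ ≤ (Fintype.card ι : ℝ≥0∞)⁻¹ * ∑ _i : ι, K ^ 2 * err μ {c} := by
        rw [err, hμ.lintegral_eq (fun i => (hS i).continuous.measurable) hmeas]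
        gcongr with i
        exact lintegral_le i
    _ = K ^ 2 * err μ {c} := by
        rw [sum_const, card_univ, nsmul_eq_mul,
          ENNReal.inv_mul_cancel_left (by simp) (natCast_ne_top _)]

end Error

section Plane

/-- The vertices of the equilateral triangle `Tri`, which are the fixed points of the maps `Smap`,
in the same order. -/
def triangleVertex : Fin 3 → E2 := ![pt 0 0, pt 1 0, pt (1 / 2) (√3 / 2)]

/-- The centroid `c` of the triangle `Tri`. -/
def triangleCentroid : E2 := pt (1 / 2) (√3 / 6)

lemma Smap_eq_homothety :
    Smap = fun i => ⇑(AffineMap.homothety (triangleVertex i) ((1 / 3 : ℝ≥0) : ℝ)) := by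
  funext i x
  ext k
  fin_cases i <;> fin_cases k <;>
    simp [Smap, S1, S2, S3, triangleVertex, pt, AffineMap.homothety_apply] <;> ring

lemma norm_sum_smul_triangleVertex_sub_sq (w : Fin 3 → ℝ) :
    ‖∑ i, w i • (triangleVertex i - triangleCentroid)‖ ^ 2 =
      (∑ i, w i ^ 2) / 2 - (∑ i, w i) ^ 2 / 6 := by
  have hsq : √3 ^ 2 = 3 := Real.sq_sqrt (by norm_num)
  rw [EuclideanSpace.real_norm_sq_eq]
  simp only [Fin.sum_univ_two, Fin.sum_univ_three, triangleVertex, triangleCentroid, pt,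
    WithLp.equiv_symm_apply, PiLp.add_apply, PiLp.smul_apply, PiLp.sub_apply, smul_eq_mul,
    Matrix.cons_val_zero, Matrix.cons_val_one, Matrix.cons_val, Matrix.cons_val_fin_one]
  linear_combination (w 0 / 6 + w 1 / 6 - w 2 / 3) ^ 2 * hsq

lemma sum_triangleVertex_sub_triangleCentroid :
    ∑ i, (triangleVertex i - triangleCentroid) = 0 := by
  have h := norm_sum_smul_triangleVertex_sub_sq fun _ => 1
  simp only [one_smul] at h
  exact norm_eq_zero.1 ((pow_eq_zero_iff two_ne_zero).1 (h.trans (by norm_num)))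

lemma norm_triangleVertex_sub_sq (i : Fin 3) :
    ‖triangleVertex i - triangleCentroid‖ ^ 2 = 1 / 3 := by
  have h := norm_sum_smul_triangleVertex_sub_sq (Pi.single i 1)
  simp only [Pi.single_apply, ite_smul, one_smul, zero_smul, ite_pow, one_pow, sum_ite_eq',
    Finset.mem_univ, if_true, ne_eq, two_ne_zero, not_false_eq_true, zero_pow] at h
  exact h.trans (by norm_num)

/-- The vertices `Smap i (triangleVertex j)` of the three triangles of the first level, indexed by
the pairs `(i, j)`. -/
def levelOneVertex (p : Fin 3 × Fin 3) : E2 := Smap p.1 (triangleVertex p.2)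

/-- Three times the coefficient of `triangleVertex i` in the sum of the points `levelOneVertex p`
over `p ∈ T`: since `Smap i` has ratio `1 / 3`, the point of index `(i, j)` is
`(2 * triangleVertex i + triangleVertex j) / 3`. -/
def vertexWeight (T : Finset (Fin 3 × Fin 3)) (i : Fin 3) : ℕ :=
  2 * #{p ∈ T | p.1 = i} + #{p ∈ T | p.2 = i}

lemma sum_vertexWeight (T : Finset (Fin 3 × Fin 3)) : ∑ i, vertexWeight T i = 3 * #T := by
  have card_fst := card_eq_sum_card_fiberwise (s := T) (f := Prod.fst) fun _ _ => mem_univ _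
  have card_snd := card_eq_sum_card_fiberwise (s := T) (f := Prod.snd) fun _ _ => mem_univ _
  simp only [vertexWeight, sum_add_distrib, ← mul_sum, ← card_fst, ← card_snd]
  ring

lemma sum_vertexWeight_sq_le (T : Finset (Fin 3 × Fin 3)) :
    ∑ i, vertexWeight T i ^ 2 ≤ #T * (3 * #T + 8) := by
  decide +kernel +revert

lemma eq_singleton_product_of_sum_vertexWeight_sq_eq {T : Finset (Fin 3 × Fin 3)}
    (hT : T.Nonempty) (h : ∑ i, vertexWeight T i ^ 2 = #T * (3 * #T + 8)) :
    ∃ i, T = {i} ×ˢ Finset.univ := by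
  decide +kernel +revert

lemma levelOneVertex_sub_triangleCentroid (p : Fin 3 × Fin 3) :
    levelOneVertex p - triangleCentroid =
      (2 / 3 : ℝ) • (triangleVertex p.1 - triangleCentroid) +
        (1 / 3 : ℝ) • (triangleVertex p.2 - triangleCentroid) := by
  simp only [levelOneVertex, Smap_eq_homothety, AffineMap.homothety_apply, vsub_eq_sub,
    vadd_eq_add]
  push_cast
  module

lemma sum_levelOneVertex_sub_triangleCentroid (T : Finset (Fin 3 × Fin 3)) :
    ∑ p ∈ T, (levelOneVertex p - triangleCentroid) =
      ∑ i, (vertexWeight T i / 3 : ℝ) • (triangleVertex i - triangleCentroid) := by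
  have sum_fiber (f : Fin 3 × Fin 3 → Fin 3) :
      ∑ p ∈ T, (triangleVertex (f p) - triangleCentroid) =
        ∑ i, (#{p ∈ T | f p = i} : ℝ) • (triangleVertex i - triangleCentroid) := by
    rw [← sum_fiberwise' T f fun i => triangleVertex i - triangleCentroid]
    simp only [sum_const, Nat.cast_smul_eq_nsmul]
  simp only [levelOneVertex_sub_triangleCentroid, sum_add_distrib, ← smul_sum]
  rw [sum_fiber Prod.fst, sum_fiber Prod.snd, smul_sum, smul_sum, ← sum_add_distrib]
  refine sum_congr rfl fun i _ => ?_
  rw [vertexWeight]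
  push_cast
  module

lemma norm_sum_levelOneVertex_sub_sq (T : Finset (Fin 3 × Fin 3)) :
    ‖∑ p ∈ T, (levelOneVertex p - triangleCentroid)‖ ^ 2 =
      ((∑ i, vertexWeight T i ^ 2 : ℕ) - 3 * (#T : ℝ) ^ 2) / 18 := by
  have hsum : ∑ i, (vertexWeight T i : ℝ) = 3 * #T := mod_cast sum_vertexWeight T
  rw [sum_levelOneVertex_sub_triangleCentroid, norm_sum_smul_triangleVertex_sub_sq]
  simp only [div_pow, ← sum_div, hsum, Nat.cast_sum, Nat.cast_pow]
  ring

lemma sum_Smap_triangleVertex_sub (i : Fin 3) (a : E2) :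
    ∑ j, (Smap i (triangleVertex j) - a) = (3 : ℝ) • (Smap i triangleCentroid - a) := by
  have hsub (j : Fin 3) : Smap i (triangleVertex j) - a =
      (Smap i triangleCentroid - a) +
        (1 / 3 : ℝ) • (triangleVertex j - triangleCentroid) := by
    simp only [Smap_eq_homothety, AffineMap.homothety_apply, vsub_eq_sub, vadd_eq_add]
    push_cast
    module
  simp only [hsub, sum_add_distrib, ← smul_sum, sum_triangleVertex_sub_triangleCentroid,
    smul_zero, add_zero, sum_const, card_univ, Fintype.card_fin]
  exact (Nat.cast_smul_eq_nsmul ℝ 3 _).symm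

lemma sum_levelOneVertex_gain_le (T : Finset (Fin 3 × Fin 3)) (a : E2) :
    ∑ p ∈ T, (‖levelOneVertex p - triangleCentroid‖ ^ 2 - ‖levelOneVertex p - a‖ ^ 2) ≤
      4 / 9 := by
  obtain rfl | hT := T.eq_empty_or_nonempty
  · norm_num
  have hcard : (0 : ℝ) < #T := mod_cast hT.card_pos
  have hweight : ((∑ i, vertexWeight T i ^ 2 : ℕ) : ℝ) ≤ #T * (3 * #T + 8) :=
    mod_cast sum_vertexWeight_sq_le T
  refine le_of_mul_le_mul_left ?_ hcard
  rw [card_mul_sum_norm_sub_sq_sub, norm_sum_levelOneVertex_sub_sq]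
  linarith [sq_nonneg ‖∑ p ∈ T, (levelOneVertex p - a)‖]

lemma exists_eq_Smap_of_sum_levelOneVertex_gain_eq {T : Finset (Fin 3 × Fin 3)} {a : E2}
    (h : ∑ p ∈ T, (‖levelOneVertex p - triangleCentroid‖ ^ 2 - ‖levelOneVertex p - a‖ ^ 2) =
      4 / 9) : ∃ i, a = Smap i triangleCentroid := by
  have hT : T.Nonempty := Finset.nonempty_iff_ne_empty.2 fun hT => by norm_num [hT] at h
  have hidentity := card_mul_sum_norm_sub_sq_sub T levelOneVertex triangleCentroid a
  rw [h, norm_sum_levelOneVertex_sub_sq] at hidentity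
  have hweight : ((∑ i, vertexWeight T i ^ 2 : ℕ) : ℝ) ≤ #T * (3 * #T + 8) :=
    mod_cast sum_vertexWeight_sq_le T
  have hsq := sq_nonneg ‖∑ p ∈ T, (levelOneVertex p - a)‖
  obtain ⟨i, rfl⟩ := eq_singleton_product_of_sum_vertexWeight_sq_eq hT
    (Nat.cast_injective (R := ℝ) (by push_cast at hidentity hweight ⊢; linarith))
  have hmean : ∑ p ∈ {i} ×ˢ Finset.univ, (levelOneVertex p - a) = 0 :=
    norm_eq_zero.1 (pow_eq_zero_iff two_ne_zero |>.1 (by linarith))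
  rw [sum_product, sum_singleton] at hmean
  simp only [levelOneVertex, sum_Smap_triangleVertex_sub] at hmean
  exact ⟨i, (sub_eq_zero.1 ((smul_eq_zero_iff_right three_ne_zero).1 hmean)).symm⟩

lemma range_Smap_apply (x : E2) : (range fun i => Smap i x) = {S1 x, S2 x, S3 x} := by
  have hvec : (fun i => Smap i x) = ![S1 x, S2 x, S3 x] := by
    funext i
    fin_cases i <;> rfl
  rw [hvec, Matrix.range_cons, Matrix.range_cons_cons_empty, singleton_union]

lemma range_Smap_triangleCentroid : (range fun i => Smap i triangleCentroid) =
    {pt (1 / 6) (√3 / 18), pt (5 / 6) (√3 / 18), pt (1 / 2) (7 * √3 / 18)} := by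
  rw [range_Smap_apply]
  congr! <;> ext k <;> fin_cases k <;> simp [S1, S2, S3, triangleCentroid, pt] <;> ring

lemma ncard_range_Smap_triangleCentroid_le :
    (range fun i => Smap i triangleCentroid).ncard ≤ 3 := by
  rw [← image_univ]
  exact (ncard_image_le finite_univ).trans_eq (by simp)

end Plane

section RMeasure

variable {P : Measure E2}

lemma isSelfSimilar_Smap (hP : P = (3 : ℝ≥0∞)⁻¹ • (P.map S1 + P.map S2 + P.map S3)) :
    IsSelfSimilar Smap P := by
  rw [IsSelfSimilar, Fintype.card_fin, Fin.sum_univ_three]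
  exact hP

namespace IsSelfSimilar

lemma homothety_triangleVertex (hP : IsSelfSimilar Smap P) :
    IsSelfSimilar (fun i => AffineMap.homothety (triangleVertex i) ((1 / 3 : ℝ≥0) : ℝ)) P :=
  Smap_eq_homothety ▸ hP

variable [IsProbabilityMeasure P]

lemma integrable_norm_sub_sq (hP : IsSelfSimilar Smap P) (c : E2) :
    Integrable (fun x => ‖x - c‖ ^ 2) P :=
  hP.homothety_triangleVertex.integrable_of_continuous (by norm_num) (by fun_prop)

lemma integral_norm_sub_triangleCentroid_sq (hP : IsSelfSimilar Smap P) :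
    ∫ x, ‖x - triangleCentroid‖ ^ 2 ∂P = 1 / 6 := by
  rw [hP.homothety_triangleVertex.integral_norm_sub_sq (by norm_num)
    sum_triangleVertex_sub_triangleCentroid]
  simp only [norm_triangleVertex_sub_sq, Fintype.expect_const]
  norm_num

lemma exists_distortionGain_le_sum_levelOneVertex (hP : IsSelfSimilar Smap P) (c a : E2) :
    ∃ T, distortionGain P c a ≤
      (∑ p ∈ T, (‖levelOneVertex p - c‖ ^ 2 - ‖levelOneVertex p - a‖ ^ 2)) / 9 := by
  obtain ⟨T, hT⟩ := hP.homothety_triangleVertex.exists_distortionGain_le (by norm_num) c a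
  refine ⟨T, hT.trans_eq ?_⟩
  norm_num [levelOneVertex, Smap_eq_homothety]

lemma distortionGain_le (hP : IsSelfSimilar Smap P) (a : E2) :
    distortionGain P triangleCentroid a ≤ 4 / 81 := by
  obtain ⟨T, hT⟩ := hP.exists_distortionGain_le_sum_levelOneVertex triangleCentroid a
  linarith [sum_levelOneVertex_gain_le T a]

lemma exists_eq_Smap_of_le_distortionGain (hP : IsSelfSimilar Smap P) {a : E2}
    (ha : 4 / 81 ≤ distortionGain P triangleCentroid a) : ∃ i, a = Smap i triangleCentroid := by
  obtain ⟨T, hT⟩ := hP.exists_distortionGain_le_sum_levelOneVertex triangleCentroid a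
  exact exists_eq_Smap_of_sum_levelOneVertex_gain_eq
    ((sum_levelOneVertex_gain_le T a).antisymm (by linarith))

lemma sum_distortionGain_le (hP : IsSelfSimilar Smap P) {s : Finset E2} (hs : #s ≤ 3) :
    ∑ a ∈ s, distortionGain P triangleCentroid a ≤ 4 / 27 := by
  have hcard : (#s : ℝ) ≤ 3 := mod_cast hs
  have hsum := sum_le_card_nsmul s _ _ fun a _ => hP.distortionGain_le a
  rw [nsmul_eq_mul] at hsum
  linarith

lemma eq_range_of_le_sum_distortionGain (hP : IsSelfSimilar Smap P) {s : Finset E2}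
    (hs : #s ≤ 3) (h : 4 / 27 ≤ ∑ a ∈ s, distortionGain P triangleCentroid a) :
    (s : Set E2) = range fun i => Smap i triangleCentroid := by
  have hle : ∀ a ∈ s, distortionGain P triangleCentroid a ≤ 4 / 81 :=
    fun a _ => hP.distortionGain_le a
  have hsum := sum_le_card_nsmul s _ _ hle
  rw [nsmul_eq_mul] at hsum
  have hcard : #s = 3 := hs.antisymm <| by
    have : (3 : ℝ) ≤ #s := by linarith
    exact_mod_cast this
  have hgain : ∑ a ∈ s, distortionGain P triangleCentroid a = ∑ _a ∈ s, (4 / 81 : ℝ) :=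
    (sum_le_sum hle).antisymm <| by
      rw [sum_const, hcard]
      exact le_of_eq_of_le (by norm_num) h
  refine eq_of_subset_of_ncard_le (fun a ha => ?_) ?_ (finite_range _)
  · obtain ⟨i, rfl⟩ :=
      hP.exists_eq_Smap_of_le_distortionGain ((sum_eq_sum_iff_of_le hle).1 hgain a ha).ge
    exact mem_range_self i
  · rw [ncard_coe_finset, hcard]
    exact ncard_range_Smap_triangleCentroid_le

lemma ofReal_sub_sum_distortionGain_le_err (hP : IsSelfSimilar Smap P) (s : Finset E2) :
    ENNReal.ofReal (1 / 6 - ∑ a ∈ s, distortionGain P triangleCentroid a) ≤ err P s := by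
  rw [← hP.integral_norm_sub_triangleCentroid_sq]
  exact ofReal_integral_sub_sum_distortionGain_le_err (hP.integrable_norm_sub_sq _) s

lemma eq_range_of_err_le (hP : IsSelfSimilar Smap P) {s : Finset E2} (hs : #s ≤ 3)
    (h : err P s ≤ ENNReal.ofReal (1 / 54)) :
    (s : Set E2) = range fun i => Smap i triangleCentroid := by
  refine hP.eq_range_of_le_sum_distortionGain hs ?_
  have hle := (ofReal_le_ofReal_iff (by norm_num)).1
    ((hP.ofReal_sub_sum_distortionGain_le_err s).trans h)
  linarith

lemma ofReal_le_err (hP : IsSelfSimilar Smap P) {s : Finset E2} (hs : #s ≤ 3) :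
    ENNReal.ofReal (1 / 54) ≤ err P s :=
  (ofReal_le_ofReal (by linarith [hP.sum_distortionGain_le hs])).trans
    (hP.ofReal_sub_sum_distortionGain_le_err s)

lemma err_range_Smap_triangleCentroid_le (hP : IsSelfSimilar Smap P) :
    err P (range fun i => Smap i triangleCentroid) ≤ ENNReal.ofReal (1 / 54) := by
  refine (hP.err_range_le (K := 1 / 3)
    (fun i => Smap_eq_homothety ▸ lipschitzWith_homothety _ _) triangleCentroid).trans_eq ?_
  rw [err_singleton (hP.integrable_norm_sub_sq _), hP.integral_norm_sub_triangleCentroid_sq,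
    ← ofReal_coe_nnreal, ← ofReal_pow (by positivity), ← ofReal_mul (by positivity)]
  norm_num

lemma quantErr_three (hP : IsSelfSimilar Smap P) : quantErr P 3 = ENNReal.ofReal (1 / 54) := by
  refine le_antisymm ?_ (le_iInf₂ fun α ⟨hα, hcard⟩ => ?_)
  · exact (iInf₂_le _ ⟨finite_range _, ncard_range_Smap_triangleCentroid_le⟩).trans
      hP.err_range_Smap_triangleCentroid_le
  · obtain ⟨s, rfl⟩ := hα.exists_finset_coe
    exact hP.ofReal_le_err (ncard_coe_finset s ▸ hcard)

lemma isOptimal_range_Smap_triangleCentroid (hP : IsSelfSimilar Smap P) :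
    IsOptimal P 3 (range fun i => Smap i triangleCentroid) := by
  have hα := finite_range fun i => Smap i triangleCentroid
  have hcard := ncard_range_Smap_triangleCentroid_le
  exact ⟨hα, hcard, (hP.err_range_Smap_triangleCentroid_le.trans_eq
    hP.quantErr_three.symm).antisymm (iInf₂_le _ ⟨hα, hcard⟩)⟩

lemma eq_range_of_isOptimal (hP : IsSelfSimilar Smap P) {β : Set E2} (hβ : IsOptimal P 3 β) :
    β = range fun i => Smap i triangleCentroid := by
  obtain ⟨hfin, hcard, herr⟩ := hβ
  obtain ⟨s, rfl⟩ := hfin.exists_finset_coe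
  exact hP.eq_range_of_err_le (ncard_coe_finset s ▸ hcard) (herr.trans hP.quantErr_three).le

end IsSelfSimilar

end RMeasure

/-- The set {S₁(c), S₂(c), S₃(c)} = {(1/6, √3/18), (5/6, √3/18), (1/2, 7√3/18)}, where
c = (1/2, √3/6), is the unique optimal set of three-means for the R-measure P, and
V₃(P) = 1/54. -/
theorem stmt_8 (P : Measure E2) [IsProbabilityMeasure P]
    (hP : P = (3 : ℝ≥0∞)⁻¹ • (P.map S1 + P.map S2 + P.map S3)) :
    ({S1 (pt (1/2) (Real.sqrt 3 / 6)), S2 (pt (1/2) (Real.sqrt 3 / 6)),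
        S3 (pt (1/2) (Real.sqrt 3 / 6))} : Set E2)
        = {pt (1/6) (Real.sqrt 3 / 18), pt (5/6) (Real.sqrt 3 / 18),
            pt (1/2) (7 * Real.sqrt 3 / 18)}
      ∧ IsOptimal P 3 {pt (1/6) (Real.sqrt 3 / 18), pt (5/6) (Real.sqrt 3 / 18),
          pt (1/2) (7 * Real.sqrt 3 / 18)}
      ∧ (∀ β : Set E2, IsOptimal P 3 β →
          β = {pt (1/6) (Real.sqrt 3 / 18), pt (5/6) (Real.sqrt 3 / 18),
                pt (1/2) (7 * Real.sqrt 3 / 18)})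
      ∧ quantErr P 3 = 1 / 54 := by
  have hSP := isSelfSimilar_Smap hP
  rw [← range_Smap_triangleCentroid]
  refine ⟨(range_Smap_apply triangleCentroid).symm, hSP.isOptimal_range_Smap_triangleCentroid,
    fun _ => hSP.eq_range_of_isOptimal, ?_⟩
  rw [hSP.quantErr_three, ofReal_div_of_pos (by norm_num), ofReal_one, ofReal_ofNat]

end
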